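/- Let h ∈ C^∞(ℝ^d × ℝ^d, ℝ) be hyperconvex and even in each fibre with h(·,0) bounded from above, E ∈ ℝ, M̃ := {x : h(x,0) < E}, ξ_h(x,·) := (∇_ξ h(x,·))^{-1}, ℓ(x,v) := ξ_h(x, λ(x,v)v)·v the Finsler function at energy E (λ(x,v) > 0 the unique number with h(x, ξ_h(x, λ(x,v)v)) = E), and A_h(x,v) := ξ_h(x,v)·v the action. Let η ∈ C²([a,b], M̃) with η̇(t) ≠ 0 for all t, and let λ̂ : [a,b] → (0,∞) be the C¹ function with h(η(t), ξ_h(η(t), λ̂(t) η̇(t))) = E. Define α(t) := ∫_a^t λ̂(s)^{−1} ds and γ := η ∘ α^{−1} : [0, α(b)] → M̃. Then ∫_a^b ℓ(η(t), η̇(t)) dt = ∫_0^{α(b)} A_h(γ(s), γ′(s)) ds. -/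

import Mathlib

open scoped RealInnerProductSpace Classical
noncomputable section

/-- `ℝ^d` as a Euclidean space. -/
abbrev Ed (d : ℕ) := EuclideanSpace ℝ (Fin d)


theorem aux_strict {d : ℕ} (f : Ed d → ℝ) (hf : ContDiff ℝ (⊤ : ℕ∞) f)
    (hc : ∃ α : ℝ, 0 < α ∧ ∀ ξ v : Ed d, α * ‖v‖ ^ 2 ≤ iteratedFDeriv ℝ 2 f ξ ![v, v])
    (x y : Ed d) (hxy : x ≠ y) : f x + ⟪gradient f x, y - x⟫ < f y := by
  obtain ⟨c, hc0, hc⟩ := hc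
  have hg : ∀ w : Ed d, ⟪gradient f x, w⟫ = fderiv ℝ f x w := by
    intro w
    simp [gradient]
  rw [hg]
  set w := y - x with hw
  have hw0 : w ≠ 0 := sub_ne_zero.mpr hxy.symm
  have hline : ∀ t : ℝ, HasDerivAt (fun t : ℝ => x + t • w) w t := by
    intro t
    simpa using ((hasDerivAt_id t).smul_const w).const_add x
  have hfd : Differentiable ℝ f := hf.differentiable (by simp)
  have hffd : Differentiable ℝ (fderiv ℝ f) :=
    (hf.fderiv_right (m := (⊤ : ℕ∞)) (by first | exact le_rfl | simp)).differentiable (by simp)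
  have h1 : ∀ t : ℝ, HasDerivAt (fun t : ℝ => f (x + t • w)) (fderiv ℝ f (x + t • w) w) t :=
    fun t => (hfd _).hasFDerivAt.comp_hasDerivAt t (hline t)
  have h2 : ∀ t : ℝ, HasDerivAt (fun t : ℝ => fderiv ℝ f (x + t • w) w)
      (fderiv ℝ (fderiv ℝ f) (x + t • w) w w) t := by
    intro t
    have := (hffd (x + t • w)).hasFDerivAt.comp_hasDerivAt t (hline t)
    simpa using this.clm_apply (hasDerivAt_const t w)
  have hmono : StrictMono (fun t : ℝ => fderiv ℝ f (x + t • w) w) := by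
    refine strictMono_of_hasDerivAt_pos h2 (fun t => ?_)
    have := hc (x + t • w) w
    rw [iteratedFDeriv_two_apply] at this
    simp only [Matrix.cons_val_zero, Matrix.cons_val_one] at this
    have h3 : 0 < c * ‖w‖ ^ 2 := by positivity
    linarith
  obtain ⟨s, hs, hs'⟩ := exists_hasDerivAt_eq_slope _ _ (zero_lt_one (α := ℝ))
    (fun t _ => (h1 t).continuousAt.continuousWithinAt) (fun t _ => h1 t)
  have h4 := hmono hs.1
  simp only [hs'] at h4
  simp [hw] at h4
  simp only [hw, map_sub]
  linarith

theorem aux_unique {d : ℕ} (f : Ed d → ℝ) (hf : ContDiff ℝ (⊤ : ℕ∞) f)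
    (hc : ∃ α : ℝ, 0 < α ∧ ∀ ξ v : Ed d, α * ‖v‖ ^ 2 ≤ iteratedFDeriv ℝ 2 f ξ ![v, v])
    (x y v : Ed d) (hv : v ≠ 0) (p q : ℝ) (hp : 0 < p) (hq : 0 < q)
    (hx : gradient f x = p • v) (hy : gradient f y = q • v) (hxy : f x = f y) : p = q := by
  by_cases h : x = y
  · subst h
    rw [hx] at hy
    exact smul_left_injective ℝ hv hy
  · have h1 := aux_strict f hf hc x y h
    have h2 := aux_strict f hf hc y x (Ne.symm h)
    rw [hx, real_inner_smul_left, hxy] at h1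
    rw [hy, real_inner_smul_left, hxy, ← neg_sub y x, inner_neg_right] at h2
    have h3 : p * ⟪v, y - x⟫ < 0 := by linarith
    have h4 : 0 < q * ⟪v, y - x⟫ := by linarith
    have h5 := (pos_iff_pos_of_mul_pos h4).1 hq
    nlinarith [mul_pos hp h5]

/-- The Maupertuis-principle identity from the proof of Theorem 1.4: the Finsler length
of a regular curve `η` equals the action integral of its reparametrization
`γ = η ∘ α⁻¹` onto the energy shell, where `α(t) = ∫_a^t λ̂(s)⁻¹ ds` and `λ̂(t)` is the
fibre scaling putting `(η, λ̂ η̇)` on the energy shell `{E_h = E}`. -/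
theorem stmt10 (d : ℕ) (h : Ed d → Ed d → ℝ)
    (hsmooth : ContDiff ℝ (⊤ : ℕ∞) (fun p : Ed d × Ed d => h p.1 p.2))
    (hconv : ∀ x : Ed d, ∃ α : ℝ, 0 < α ∧ ∀ ξ v : Ed d,
      α * ‖v‖ ^ 2 ≤ iteratedFDeriv ℝ 2 (h x) ξ ![v, v])
    (heven : ∀ x ξ : Ed d, h x ξ = h x (-ξ))
    (hbdd : ∃ K : ℝ, ∀ x : Ed d, h x 0 ≤ K)
    (ξh : Ed d → Ed d → Ed d)
    (hξh1 : ∀ x v : Ed d, gradient (h x) (ξh x v) = v)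
    (hξh2 : ∀ x ξ : Ed d, ξh x (gradient (h x) ξ) = ξ)
    (E : ℝ)
    (lam : Ed d → Ed d → ℝ)
    (hlam : ∀ x : Ed d, h x 0 < E → ∀ v : Ed d, v ≠ 0 →
      0 < lam x v ∧ h x (ξh x (lam x v • v)) = E)
    (ℓ : Ed d → Ed d → ℝ)
    (hℓ : ∀ x v : Ed d, ℓ x v = if v = 0 then 0 else ⟪ξh x (lam x v • v), v⟫)
    (a b : ℝ) (hab : a ≤ b)
    (η : ℝ → Ed d) (η' : ℝ → Ed d)
    (hηC2 : ContDiffOn ℝ 2 η (Set.Icc a b))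
    (hη : ∀ t ∈ Set.Icc a b, HasDerivAt η (η' t) t)
    (hη0 : ∀ t ∈ Set.Icc a b, η' t ≠ 0)
    (hηM : ∀ t ∈ Set.Icc a b, h (η t) 0 < E)
    (lamh : ℝ → ℝ)
    (hlamhC1 : ContDiffOn ℝ 1 lamh (Set.Icc a b))
    (hlamhpos : ∀ t ∈ Set.Icc a b, 0 < lamh t)
    (hlamhE : ∀ t ∈ Set.Icc a b, h (η t) (ξh (η t) (lamh t • η' t)) = E)
    (α : ℝ → ℝ) (hα : ∀ t : ℝ, α t = ∫ s in a..t, (lamh s)⁻¹)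
    (β : ℝ → ℝ)
    (hβ1 : ∀ t ∈ Set.Icc a b, β (α t) = t)
    (hβ2 : ∀ s ∈ Set.Icc 0 (α b), α (β s) = s) :
    ∫ t in a..b, ℓ (η t) (η' t)
      = ∫ s in (0:ℝ)..(α b),
          ⟪ξh (η (β s)) (deriv (fun s' : ℝ => η (β s')) s),
            deriv (fun s' : ℝ => η (β s')) s⟫ := by
  have hlc : ContinuousOn (fun s => (lamh s)⁻¹) (Set.Icc a b) :=
    hlamhC1.continuousOn.inv₀ (fun t ht => (hlamhpos t ht).ne')
  have hαd : ∀ t ∈ Set.Ioo a b, HasStrictDerivAt α (lamh t)⁻¹ t := by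
    intro t ht
    have hn : Set.Icc a b ∈ nhds t := Icc_mem_nhds ht.1 ht.2
    have he : α = fun t => ∫ s in a..t, (lamh s)⁻¹ := funext hα
    rw [he]
    refine intervalIntegral.integral_hasStrictDerivAt_right ?_ ?_ (hlc.continuousAt hn)
    · refine (hlc.mono ?_).intervalIntegrable
      rw [Set.uIcc_of_le ht.1.le]
      exact Set.Icc_subset_Icc_right ht.2.le
    · exact (hlc.mono Set.Ioo_subset_Icc_self).stronglyMeasurableAtFilter isOpen_Ioo t ht
  have hαc : ContinuousOn α (Set.Icc a b) := by
    have he : α = fun t => ∫ s in a..t, (lamh s)⁻¹ := funext hα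
    rw [he]
    have := intervalIntegral.continuousOn_primitive_interval (a := a) (b := b)
      (f := fun s => (lamh s)⁻¹) (μ := MeasureTheory.volume)
      (by rw [Set.uIcc_of_le hab]; exact hlc.integrableOn_Icc)
    rwa [Set.uIcc_of_le hab] at this
  have hα0 : α a = 0 := by rw [hα]; simp
  have hmono : StrictMonoOn α (Set.Icc a b) := by
    refine strictMonoOn_of_deriv_pos (convex_Icc a b) hαc (fun t ht => ?_)
    rw [interior_Icc] at ht
    rw [(hαd t ht).hasDerivAt.deriv]
    exact inv_pos.mpr (hlamhpos t (Set.Ioo_subset_Icc_self ht))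
  have himg : α '' Set.Ioo a b = Set.Ioo 0 (α b) := by
    apply Set.Subset.antisymm
    · rintro _ ⟨t, ht, rfl⟩
      have ht' := Set.Ioo_subset_Icc_self ht
      rw [← hα0]
      exact ⟨hmono (Set.left_mem_Icc.2 hab) ht' ht.1, hmono ht' (Set.right_mem_Icc.2 hab) ht.2⟩
    · have := intermediate_value_Ioo hab hαc
      rwa [hα0] at this
  have h0b : 0 ≤ α b := by
    rw [← hα0]
    exact hmono.monotoneOn (Set.left_mem_Icc.2 hab) (Set.right_mem_Icc.2 hab) hab
  rw [intervalIntegral.integral_of_le hab, intervalIntegral.integral_of_le h0b,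
    MeasureTheory.integral_Ioc_eq_integral_Ioo, MeasureTheory.integral_Ioc_eq_integral_Ioo,
    ← himg, MeasureTheory.integral_image_eq_integral_abs_deriv_smul measurableSet_Ioo
      (fun t ht => (hαd t ht).hasDerivAt.hasDerivWithinAt)
      (hmono.injOn.mono Set.Ioo_subset_Icc_self)]
  refine MeasureTheory.setIntegral_congr_fun measurableSet_Ioo (fun t ht => ?_)
  have ht' := Set.Ioo_subset_Icc_self ht
  have hpos := hlamhpos t ht'
  have hβd : HasDerivAt β (lamh t) (α t) := by
    have := (hαd t ht).to_local_left_inverse (g := β) (inv_ne_zero hpos.ne')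
      (Filter.mem_of_superset (Icc_mem_nhds ht.1 ht.2) hβ1)
    simpa using this.hasDerivAt
  have hγ : deriv (fun s' : ℝ => η (β s')) (α t) = lamh t • η' t := by
    refine HasDerivAt.deriv ?_
    refine HasDerivAt.scomp (α t) ?_ hβd
    rw [hβ1 t ht']
    exact hη t ht'
  have hl := hlam (η t) (hηM t ht') (η' t) (hη0 t ht')
  have huniq : lam (η t) (η' t) = lamh t := by
    refine aux_unique (h (η t)) ?_ (hconv _) _ _ (η' t) (hη0 t ht') _ _ hl.1 hpos
      (hξh1 _ _) (hξh1 _ _) (hl.2.trans (hlamhE t ht').symm)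
    exact hsmooth.comp (contDiff_const.prodMk contDiff_id)
  simp only [hγ, hβ1 t ht', hℓ, if_neg (hη0 t ht'), huniq]
  rw [real_inner_smul_right, abs_of_pos (inv_pos.mpr hpos), smul_eq_mul,
    inv_mul_cancel_left₀ hpos.ne']
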